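/- Let n be a positive integer and let f : [0,1] → [0,1] be a unimodal, locally eventually onto map with critical point c such that ω(c) ≃ ω·n + 1. Then the set of inhomogeneities 𝓘 satisfies 𝓘 ≃ ω·n + 1. -/

import Mathlib

/-!
Write `K = ω(c)` and `g = f|_K`. The map `g` is a continuous surjection of the compact space `K`,
and the set of inhomogeneities is the inverse limit of `g` (`inhomHomeo`). Let `D` be the set of
non-isolated points of `K`, which is finite because `K ≃ ω·n + 1`.

* Surjectivity and compactness give `D ⊆ g(D)`, so `g` permutes the finite set `D`
  (`image_nonIso`, `injOn_nonIso`).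
* No isolated point of `K` is periodic: its orbit would be a clopen invariant subset of an
  omega-limit set, hence all of `K`, which is infinite (`isolated_not_periodic`).
* `c ∉ K`, since otherwise the orbit of `c`, and hence `K`, would be finite (`critical_notMem`).
  So `g` is locally injective; being injective on `D`, it is injective near `D`, and all but
  finitely many points of `K` have a unique `g`-preimage (`exists_finite_exceptional`).

A backward orbit that leaves `D` consists, from some index on, of pairwise distinct isolated
points, so it eventually avoids the finitely many points with several preimages and is isolated in
the inverse limit. A backward orbit inside `D` is not isolated, because every coordinate projection
of the inverse limit is onto `K`. So the non-isolated points of the inverse limit are the backward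
orbits in `D` (`mem_nonIso_backOrbit`), and these correspond to `D` through the zeroth coordinate.

Finally, a compact metrizable space whose set `D` of non-isolated points is finite and nonempty is
homeomorphic to `D × OnePoint ℕ` (`homeo_prod_onePoint`), so the inverse limit is homeomorphic
to `K`.
-/

open Set Filter

noncomputable section

/-- The unit interval `[0,1]` as a subtype of `ℝ`. -/
abbrev unitI : Type := Set.Icc (0 : ℝ) 1

/-- `f : [0,1] → [0,1]` is unimodal with critical point `c`: continuous, `c ∈ (0,1)`,
strictly increasing on `[0,c]` and strictly decreasing on `[c,1]`. -/
def Unimodal (f : unitI → unitI) (c : unitI) : Prop :=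
  Continuous f ∧ 0 < (c : ℝ) ∧ (c : ℝ) < 1 ∧
    StrictMonoOn f {x : unitI | x ≤ c} ∧ StrictAntiOn f {x : unitI | c ≤ x}

/-- `f` is locally eventually onto: for every `ε > 0` and every `x`, some iterate of `f`
maps the `ε`-ball about `x` (in `[0,1]`) onto all of `[0,1]`. -/
def LEO (f : unitI → unitI) : Prop :=
  ∀ ε : ℝ, 0 < ε → ∀ x : unitI, ∃ N : ℕ, f^[N] '' Metric.ball x ε = Set.univ

/-- The omega-limit set of `c` under `f`: `⋂ₙ closure {fᵐ(c) : m ≥ n}`. -/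
def omegaLimitSet (f : unitI → unitI) (c : unitI) : Set unitI :=
  ⋂ n : ℕ, closure {y : unitI | ∃ m : ℕ, n ≤ m ∧ f^[m] c = y}

/-- The inverse limit of `f`, as a subset of the product `ℕ → [0,1]`
(the subspace topology coincides with the topology induced by the usual metric). -/
def InvLim (f : unitI → unitI) : Set (ℕ → unitI) :=
  {x | ∀ i : ℕ, f (x (i + 1)) = x i}

/-- The set of inhomogeneities: points of the inverse limit all of whose
coordinates lie in the postcritical omega-limit set. -/
def Inhom (f : unitI → unitI) (c : unitI) : Set (InvLim f) :=
  {x | ∀ n : ℕ, (x : ℕ → unitI) n ∈ omegaLimitSet f c}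

/-- The ordinal space `{ξ : ξ ≤ o}` with its order topology. -/
def OrdSpace (o : Ordinal) : Type _ := Set.Iic o

instance (o : Ordinal) : LinearOrder (OrdSpace o) :=
  inferInstanceAs (LinearOrder (Set.Iic o))

instance (o : Ordinal) : TopologicalSpace (OrdSpace o) := Preorder.topology (OrdSpace o)

instance (o : Ordinal) : OrderTopology (OrdSpace o) := ⟨rfl⟩

/-- `X ≃ ω^γ·k + 1` in the sense of the paper: `X` is homeomorphic to the
ordinal space `{ξ : ξ ≤ o}` with its order topology. -/
def HomeoOrd (X : Type*) [TopologicalSpace X] (o : Ordinal) : Prop :=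
  Nonempty (X ≃ₜ OrdSpace o)

open Topology

universe u v

/-! ### Compact spaces with finitely many non-isolated points -/

/-- The set of non-isolated points (the Cantor–Bendixson derivative) of a space. -/
def nonIso (X : Type*) [TopologicalSpace X] : Set X := {x | ¬ IsOpen ({x} : Set X)}

lemma finite_of_isolated {X : Type*} [TopologicalSpace X] [CompactSpace X] {F : Set X}
    (hF : IsClosed F) (hiso : ∀ x ∈ F, IsOpen ({x} : Set X)) : F.Finite := by
  obtain ⟨t, ht, hft, hsub⟩ := hF.isCompact.elim_finite_subcover_image (b := F)
    (c := fun x => ({x} : Set X)) hiso (fun x hx => by simpa using hx)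
  exact hft.subset (by simpa using hsub)

lemma nonIso_nonempty (X : Type*) [TopologicalSpace X] [CompactSpace X] [Infinite X] :
    (nonIso X).Nonempty := by
  by_contra h
  refine Set.infinite_univ (α := X) (finite_of_isolated isClosed_univ fun x _ => ?_)
  by_contra hx
  exact h ⟨x, hx⟩

/-- A retraction onto the finite set of non-isolated points splits the space into clopen pieces,
each of which is a sequence converging to its unique non-isolated point. -/
lemma homeo_prod_onePoint (X : Type*) [TopologicalSpace X] [CompactSpace X] [T2Space X]
    [SecondCountableTopology X] (hfin : (nonIso X).Finite) (hne : (nonIso X).Nonempty) :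
    Nonempty (nonIso X × OnePoint ℕ ≃ₜ X) := by
  classical
  obtain ⟨U, hU, hdisj⟩ := hfin.t2_separation
  obtain ⟨p₀, hp₀⟩ := hne
  have : Finite (nonIso X) := hfin
  let r : X → nonIso X := fun x =>
    if h : ∃ p : nonIso X, x ∈ U p then h.choose else ⟨p₀, hp₀⟩
  have hr : ∀ (p : nonIso X) (x : X), x ∈ U p → r x = p := by
    intro p x hx
    have h : ∃ p : nonIso X, x ∈ U p := ⟨p, hx⟩
    have h1 : r x = h.choose := dif_pos h
    rw [h1]
    by_contra hne
    exact Set.disjoint_left.1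
      (hdisj h.choose.2 p.2 (fun e => hne (Subtype.ext e))) h.choose_spec hx
  have hrc : Continuous r := by
    rw [continuous_iff_continuousAt]
    intro x
    by_cases hx : x ∈ nonIso X
    · have : r =ᶠ[𝓝 x] fun _ => (⟨x, hx⟩ : nonIso X) := by
        filter_upwards [(hU x).2.mem_nhds (hU x).1] with y hy using hr ⟨x, hx⟩ y hy
      exact (continuousAt_const).congr this.symm
    · have hx' : IsOpen ({x} : Set X) := not_not.1 hx
      have : 𝓝 x = pure x := by rw [← isOpen_singleton_iff_nhds_eq_pure]; exact hx'
      rw [ContinuousAt, this]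
      exact tendsto_pure_nhds _ _
  let F : nonIso X → Set X := fun p => r ⁻¹' {p} \ {(p : X)}
  have hFiso : ∀ p, ∀ x ∈ F p, IsOpen ({x} : Set X) := by
    intro p x hx
    by_contra hn
    exact hx.2 (congrArg Subtype.val ((hr ⟨x, hn⟩ x (hU x).1).symm.trans hx.1))
  have hopen : ∀ p, IsOpen (r ⁻¹' {p}) := fun p => (isOpen_discrete {p}).preimage hrc
  have hclosed : ∀ p, IsClosed (r ⁻¹' {p}) := fun p => (isClosed_discrete {p}).preimage hrc
  have hFinf : ∀ p, (F p).Infinite := by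
    intro p hfinF
    refine p.2 ?_
    have : ({(p : X)} : Set X) = r ⁻¹' {p} \ F p := by
      ext y
      simp only [F, Set.mem_sdiff, mem_preimage, mem_singleton_iff, not_and, not_not]
      constructor
      · rintro rfl
        exact ⟨hr p _ (hU _).1, fun _ => rfl⟩
      · exact fun h => h.2 h.1
    rw [this]
    exact (hopen p).sdiff hfinF.isClosed
  have hFc : ∀ p, Countable (F p) := by
    intro p
    have : DiscreteTopology (F p) := by
      rw [discreteTopology_iff_isOpen_singleton]
      rintro ⟨x, hx⟩
      convert (hFiso p x hx).preimage continuous_subtype_val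
      ext y
      simp [Subtype.ext_iff]
    exact countable_of_Lindelof_of_discrete
  have he : ∀ p, Nonempty (ℕ ≃ F p) := by
    intro p
    have := (hFinf p).to_subtype
    have := hFc p
    exact nonempty_equiv_of_countable
  let e : ∀ p, ℕ ≃ F p := fun p => (he p).some
  let φ : nonIso X × OnePoint ℕ → X := fun q => q.2.elim (q.1 : X) (fun k => (e q.1 k : X))
  have hrφ : ∀ q, r (φ q) = q.1 := by
    rintro ⟨p, z⟩
    induction z using OnePoint.rec with
    | infty => exact hr p _ (hU _).1
    | coe k => exact (e p k).2.1
  have hbij : Function.Bijective φ := by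
    constructor
    · rintro ⟨p, z⟩ ⟨p', z'⟩ h
      obtain rfl : p = p' := by
        have := congrArg r h
        rwa [hrφ, hrφ] at this
      induction z using OnePoint.rec with
      | infty =>
        induction z' using OnePoint.rec with
        | infty => rfl
        | coe k => exact absurd h.symm (e p k).2.2
      | coe k =>
        induction z' using OnePoint.rec with
        | infty => exact absurd h (e p k).2.2
        | coe k' =>
          have : k = k' := (e p).injective (Subtype.ext h)
          rw [this]
    · intro x
      by_cases hx : x = r x
      · exact ⟨(r x, OnePoint.infty), hx.symm⟩
      · refine ⟨(r x, ((e (r x)).symm ⟨x, rfl, hx⟩ : ℕ)), ?_⟩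
        change ((e (r x)) ((e (r x)).symm ⟨x, rfl, hx⟩) : X) = x
        rw [Equiv.apply_symm_apply]
  have hcont : Continuous φ := by
    refine continuous_prod_of_discrete_left.2 fun p => ?_
    rw [OnePoint.continuous_iff_from_nat]
    change Tendsto (fun k : ℕ => (e p k : X)) atTop (𝓝 (p : X))
    rw [← Nat.cofinite_eq_atTop, tendsto_nhds]
    intro V hV hpV
    have hfin' : (r ⁻¹' {p} \ V).Finite := by
      refine finite_of_isolated ((hclosed p).sdiff hV) fun x hx => hFiso p x ⟨hx.1, ?_⟩
      rintro rfl
      exact hx.2 hpV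
    rw [Filter.mem_cofinite]
    refine (hfin'.preimage ((Subtype.val_injective.comp (e p).injective).injOn)).subset ?_
    intro k hk
    exact ⟨(e p k).2.1, hk⟩
  exact ⟨hcont.homeoOfEquivCompactToT2 (f := Equiv.ofBijective φ hbij)⟩

/-! ### Inverse limits of locally injective surjections -/

/-- The inverse limit of a self-map, as a subspace of the product. -/
def BackOrbit {K : Type*} (g : K → K) : Set (ℕ → K) := {x | ∀ i, g (x (i + 1)) = x i}

lemma exists_backOrbit {K : Type*} {g : K → K} {S : Set K} (hS : S ⊆ g '' S) {p : K} (hp : p ∈ S) (N : ℕ) :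
    ∃ x ∈ BackOrbit g, x N = p ∧ ∀ i, N ≤ i → x i ∈ S := by
  choose! b hbS hb using hS
  have hmem : ∀ k, b^[k] p ∈ S := by
    intro k
    induction k with
    | zero => exact hp
    | succ k ih => rw [Function.iterate_succ_apply']; exact hbS ih
  refine ⟨fun i => if N ≤ i then b^[i - N] p else g^[N - i] p, fun i => ?_, by simp, ?_⟩
  · by_cases h : N ≤ i
    · simp only [h, h.trans (Nat.le_succ i), if_true]
      rw [Nat.succ_sub h, Function.iterate_succ_apply']
      exact hb (hmem _)
    · by_cases h' : N ≤ i + 1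
      · obtain rfl : N = i + 1 := by omega
        simp
      · simp only [h, h', if_false]
        rw [← Function.iterate_succ_apply' g, show (N - (i + 1)).succ = N - i by omega]
  · intro i hi
    simp only [hi, if_true]
    exact hmem _

lemma iterate_backOrbit {K : Type*} {g : K → K} {x : ℕ → K} (hx : x ∈ BackOrbit g) (i k : ℕ) :
    g^[k] (x (i + k)) = x i := by
  induction k with
  | zero => rfl
  | succ k ih => rw [Function.iterate_succ_apply, ← add_assoc, hx, ih]

lemma isClosed_backOrbit {K : Type*} [TopologicalSpace K] [T2Space K] {g : K → K}
    (hg : Continuous g) : IsClosed (BackOrbit g) := by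
  rw [BackOrbit, ofPred_forall]
  exact isClosed_iInter fun i =>
    isClosed_eq (hg.comp (continuous_apply (i + 1))) (continuous_apply i)

section Abstract

variable {K : Type*} [TopologicalSpace K] [CompactSpace K] [T2Space K] {g : K → K}

/-- If every preimage of `q` is isolated, then `g⁻¹{q}` is open, so the image of its complement,
which is `{q}ᶜ`, is closed. -/
lemma nonIso_subset_image (hg : Continuous g) (hs : Function.Surjective g) :
    nonIso K ⊆ g '' nonIso K := by
  intro q hq
  by_contra hn
  apply hq
  have hopen : IsOpen (g ⁻¹' {q}) := by
    rw [← biUnion_of_singleton (g ⁻¹' {q})]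
    refine isOpen_biUnion fun x hx => ?_
    by_contra hx'
    exact hn ⟨x, hx', hx⟩
  have himg : g '' (g ⁻¹' {q})ᶜ = {q}ᶜ := by
    rw [← preimage_compl, image_preimage_eq _ hs]
  rw [← isClosed_compl_iff, ← himg]
  exact (hopen.isClosed_compl.isCompact.image hg).isClosed

lemma image_nonIso (hg : Continuous g) (hs : Function.Surjective g) (hfin : (nonIso K).Finite) :
    g '' nonIso K = nonIso K :=
  (Set.eq_of_subset_of_ncard_le (nonIso_subset_image hg hs) (Set.ncard_image_le hfin)
    (hfin.image g)).symm

lemma injOn_nonIso (hg : Continuous g) (hs : Function.Surjective g) (hfin : (nonIso K).Finite) :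
    InjOn g (nonIso K) :=
  Set.injOn_of_ncard_image_eq (by rw [image_nonIso hg hs hfin]) hfin

/-- Beyond a finite set `G` of exceptional values, preimages under `g` are unique, because `g` is
injective near the finite set of non-isolated points. -/
lemma exists_finite_exceptional (hg : Continuous g) (hs : Function.Surjective g)
    (hfin : (nonIso K).Finite) (hloc : ∀ x, ∃ u ∈ 𝓝 x, InjOn g u) :
    ∃ G : Set K, G.Finite ∧ ∀ a b, g a = g b → g a ∉ G → a = b := by
  obtain ⟨t, ht, hinj⟩ := (injOn_nonIso hg hs hfin).exists_mem_nhdsSet hfin.isCompact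
    (fun x _ => hg.continuousAt) (fun x _ => hloc x)
  obtain ⟨o, ho, hDo, hot⟩ := mem_nhdsSet_iff_exists.1 ht
  refine ⟨g '' oᶜ, Set.Finite.image g (finite_of_isolated ho.isClosed_compl ?_), ?_⟩
  · intro x hx
    by_contra hn
    exact hx (hDo hn)
  · intro a b hab hna
    refine hinj (hot ?_) (hot ?_) hab
    · by_contra h
      exact hna ⟨a, h, rfl⟩
    · by_contra h
      exact hna ⟨b, h, hab.symm⟩

/-- The non-isolated points of the inverse limit are exactly the backward orbits that stay in the
set of non-isolated points of `K`. -/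
lemma mem_nonIso_backOrbit (hg : Continuous g) (hs : Function.Surjective g)
    (hfin : (nonIso K).Finite) (hloc : ∀ x, ∃ u ∈ 𝓝 x, InjOn g u)
    (hper : ∀ x ∉ nonIso K, ∀ k, 0 < k → g^[k] x ≠ x) (x : BackOrbit g) :
    x ∈ nonIso (BackOrbit g) ↔ ∀ i, x.1 i ∈ nonIso K := by
  have hinv : ∀ y ∈ nonIso K, g y ∈ nonIso K := fun y hy =>
    image_nonIso hg hs hfin ▸ mem_image_of_mem g hy
  constructor
  · intro hx N
    by_contra hN
    apply hx
    have hiso : ∀ k, x.1 (N + k) ∉ nonIso K := by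
      intro k
      induction k with
      | zero => exact hN
      | succ k ih =>
        intro h
        apply ih
        rw [← x.2 (N + k)]
        exact hinv _ h
    have hlt : ∀ k l, k < l → x.1 (N + k) ≠ x.1 (N + l) := by
      intro k l hkl h
      refine hper _ (hiso l) (l - k) (by omega) ?_
      have := iterate_backOrbit x.2 (N + k) (l - k)
      rw [show N + k + (l - k) = N + l by omega] at this
      rw [this, h]
    have hinj : Function.Injective fun k => x.1 (N + k) := by
      intro k l h
      rcases lt_trichotomy k l with h' | h' | h'
      · exact absurd h (hlt _ _ h')
      · exact h'
      · exact absurd h.symm (hlt _ _ h')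
    obtain ⟨G, hG, hGu⟩ := exists_finite_exceptional hg hs hfin hloc
    obtain ⟨M, hM⟩ := (hG.preimage hinj.injOn).bddAbove
    have hout : ∀ k, M < k → x.1 (N + k) ∉ G := fun k hk h => absurd (hM h) (not_le.2 hk)
    -- From index `N + M + 1` on, the backward orbit is determined by its current coordinate.
    have hsing : ({x} : Set (BackOrbit g)) =
        (fun y : BackOrbit g => y.1 (N + (M + 1))) ⁻¹' {x.1 (N + (M + 1))} := by
      ext y
      simp only [mem_singleton_iff, mem_preimage]
      refine ⟨fun h => h ▸ rfl, fun h => ?_⟩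
      have hge : ∀ k, y.1 (N + (M + 1) + k) = x.1 (N + (M + 1) + k) := by
        intro k
        induction k with
        | zero => exact h
        | succ k ih =>
          refine hGu _ _ ?_ ?_
          · rw [← add_assoc, y.2, x.2, ih]
          · rw [← add_assoc, y.2, ih, add_assoc]
            exact hout _ (by omega)
      refine Subtype.ext (funext fun i => ?_)
      rw [← iterate_backOrbit y.2 i (N + (M + 1)), ← iterate_backOrbit x.2 i (N + (M + 1)),
        add_comm i, hge]
    rw [hsing]
    refine IsOpen.preimage ((continuous_apply _).comp continuous_subtype_val) ?_
    exact not_not.1 (hiso (M + 1))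
  · intro hx ho
    -- A neighbourhood of `x` in the product constrains only coordinates up to some `N`,
    -- hence contains every backward orbit whose `N`-th coordinate is close to that of `x`.
    obtain ⟨V, hV, hVx⟩ := isOpen_induced_iff.1 ho
    have hxV : x.1 ∈ V := by
      have : x ∈ Subtype.val ⁻¹' V := hVx ▸ mem_singleton x
      exact this
    obtain ⟨I, u, hu, huV⟩ := isOpen_pi_iff.1 hV x.1 hxV
    obtain ⟨N, hN⟩ := I.exists_nat_subset_range
    have hW : (⋂ i ∈ I, g^[N - i] ⁻¹' u i) ∈ 𝓝 (x.1 N) := by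
      rw [Filter.biInter_finset_mem]
      intro i hi
      have hiN : i < N := Finset.mem_range.1 (hN hi)
      refine (hg.iterate (N - i)).continuousAt.preimage_mem_nhds ?_
      have := iterate_backOrbit x.2 i (N - i)
      rw [show i + (N - i) = N by omega] at this
      rw [this]
      exact (hu i hi).1.mem_nhds (hu i hi).2
    refine hx N (isOpen_singleton_iff_nhds_eq_pure _ |>.2 (le_antisymm ?_ (pure_le_nhds _)))
    rw [le_pure_iff]
    filter_upwards [hW] with q hq
    obtain ⟨y, hy, hyN, -⟩ := exists_backOrbit (g := g) (S := univ)
      (by rw [image_univ, hs.range_eq]) (mem_univ q) N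
    have hyV : y ∈ V := huV fun i hi => by
      have hiN : i < N := Finset.mem_range.1 (hN hi)
      have := iterate_backOrbit hy i (N - i)
      rw [show i + (N - i) = N by omega, hyN] at this
      rw [← this]
      exact mem_iInter₂.1 hq i hi
    have : (⟨y, hy⟩ : BackOrbit g) ∈ ({x} : Set (BackOrbit g)) := hVx ▸ hyV
    rw [← hyN, ← mem_singleton_iff.1 this]
    rfl

theorem backOrbit_homeo [SecondCountableTopology K] [Infinite K]
    (hg : Continuous g) (hs : Function.Surjective g)
    (hfin : (nonIso K).Finite) (hloc : ∀ x, ∃ u ∈ 𝓝 x, InjOn g u)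
    (hper : ∀ x ∉ nonIso K, ∀ k, 0 < k → g^[k] x ≠ x) :
    Nonempty (BackOrbit g ≃ₜ K) := by
  have hmem := mem_nonIso_backOrbit hg hs hfin hloc hper
  have : CompactSpace (BackOrbit g) :=
    isCompact_iff_compactSpace.1 (isClosed_backOrbit hg).isCompact
  let π : nonIso (BackOrbit g) → nonIso K := fun x => ⟨x.1.1 0, (hmem x.1).1 x.2 0⟩
  have hπ : Function.Bijective π := by
    constructor
    · intro x y h
      have h0 : x.1.1 0 = y.1.1 0 := congrArg Subtype.val h
      refine Subtype.ext (Subtype.ext (funext fun i => ?_))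
      induction i with
      | zero => exact h0
      | succ i ih =>
        refine injOn_nonIso hg hs hfin ((hmem x.1).1 x.2 _) ((hmem y.1).1 y.2 _) ?_
        rw [x.1.2, y.1.2, ih]
    · rintro ⟨p, hp⟩
      obtain ⟨x, hx, hx0, hxS⟩ := exists_backOrbit (nonIso_subset_image hg hs) hp 0
      exact ⟨⟨⟨x, hx⟩, (hmem _).2 fun i => hxS i i.zero_le⟩, Subtype.ext hx0⟩
  have : Finite (nonIso K) := hfin
  have hfin' : Finite (nonIso (BackOrbit g)) := Finite.of_injective π hπ.1
  have hne : (nonIso (BackOrbit g)).Nonempty := by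
    obtain ⟨p, hp⟩ := nonIso_nonempty K
    obtain ⟨x, -⟩ := hπ.2 ⟨p, hp⟩
    exact ⟨x.1, x.2⟩
  obtain ⟨a⟩ := homeo_prod_onePoint (BackOrbit g) hfin' hne
  obtain ⟨b⟩ := homeo_prod_onePoint K hfin (nonIso_nonempty K)
  let m : nonIso (BackOrbit g) ≃ₜ nonIso K := (Equiv.ofBijective π hπ).toHomeomorphOfDiscrete
  exact ⟨a.symm.trans ((m.prodCongr (Homeomorph.refl _)).trans b)⟩

end Abstract

/-! ### The postcritical omega-limit set -/

section Omega

variable {f : unitI → unitI} {c : unitI}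

lemma mem_omegaLimitSet_iff {y : unitI} :
    y ∈ omegaLimitSet f c ↔ MapClusterPt y atTop (fun m => f^[m] c) := by
  rw [mapClusterPt_iff_frequently]
  simp only [omegaLimitSet, mem_iInter, mem_closure_iff_nhds, frequently_atTop]
  constructor
  · intro h s hs n
    obtain ⟨_, hz, m, hm, rfl⟩ := h n s hs
    exact ⟨m, hm, hz⟩
  · intro h n s hs
    obtain ⟨m, hm, hz⟩ := h s hs n
    exact ⟨_, hz, m, hm, rfl⟩

lemma isClosed_omegaLimitSet : IsClosed (omegaLimitSet f c) :=
  isClosed_iInter fun _ => isClosed_closure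

lemma eventually_mem_of_omegaLimitSet_subset {W : Set unitI} (hW : IsOpen W)
    (h : omegaLimitSet f c ⊆ W) : ∀ᶠ m in atTop, f^[m] c ∈ W := by
  by_contra hn
  obtain ⟨a, ha, hca⟩ :=
    hW.isClosed_compl.isCompact.exists_mapClusterPt_of_frequently (not_eventually.1 hn)
  exact ha (h (mem_omegaLimitSet_iff.2 hca))

lemma omegaLimitSet_subset_closure {A : Set unitI} (h : ∀ᶠ m in atTop, f^[m] c ∈ A) :
    omegaLimitSet f c ⊆ closure A := by
  obtain ⟨N, hN⟩ := eventually_atTop.1 h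
  refine (iInter_subset _ N).trans (closure_mono ?_)
  rintro _ ⟨m, hm, rfl⟩
  exact hN m hm

lemma mapsTo_omegaLimitSet (hf : Continuous f) :
    MapsTo f (omegaLimitSet f c) (omegaLimitSet f c) := by
  intro y hy
  simp only [omegaLimitSet, mem_iInter] at hy ⊢
  intro n
  refine map_mem_closure hf (hy n) ?_
  rintro _ ⟨m, hm, rfl⟩
  exact ⟨m + 1, by omega, Function.iterate_succ_apply' f m c⟩

lemma surjOn_omegaLimitSet (hf : Continuous f) :
    SurjOn f (omegaLimitSet f c) (omegaLimitSet f c) := by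
  intro y hy
  by_contra hn
  obtain ⟨A, B, hA, hB, hKA, hyB, hAB⟩ := SeparatedNhds.of_isCompact_isCompact
    (isClosed_omegaLimitSet.isCompact.image hf) (isCompact_singleton (x := y))
    (disjoint_singleton_right.2 hn)
  have h1 := eventually_mem_of_omegaLimitSet_subset (hA.preimage hf) (image_subset_iff.1 hKA)
  obtain ⟨N, hN⟩ := eventually_atTop.1 h1
  obtain ⟨_, hz, m, hm, rfl⟩ := mem_closure_iff.1 (mem_iInter.1 hy (N + 1)) B hB (hyB rfl)
  refine Set.disjoint_left.1 hAB ?_ hz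
  obtain ⟨k, rfl⟩ : ∃ k, m = k + 1 := ⟨m - 1, by omega⟩
  rw [Function.iterate_succ_apply']
  exact hN k (by omega)

lemma omegaLimitSet_finite_of_iterate_eq {i j : ℕ} (hij : i < j) (h : f^[i] c = f^[j] c) :
    (omegaLimitSet f c).Finite := by
  have hall : ∀ m, ∃ k < j, f^[m] c = f^[k] c := by
    intro m
    induction m with
    | zero => exact ⟨0, by omega, rfl⟩
    | succ m ih =>
      obtain ⟨k, hk, hmk⟩ := ih
      rw [Function.iterate_succ_apply', hmk, ← Function.iterate_succ_apply' f]
      rcases Nat.lt_or_ge (k + 1) j with h' | h'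
      · exact ⟨k + 1, h', rfl⟩
      · obtain rfl : j = k + 1 := by omega
        exact ⟨i, hij, h.symm⟩
  have hfin : ((fun k => f^[k] c) '' Iio j).Finite := (finite_Iio j).image _
  refine hfin.subset ?_
  rw [← hfin.isClosed.closure_eq]
  refine omegaLimitSet_subset_closure (Eventually.of_forall fun m => ?_)
  obtain ⟨k, hk, hmk⟩ := hall m
  exact ⟨k, hk, hmk.symm⟩

/-- The self-map of the omega-limit set induced by `f`. -/
def omegaMap (hf : Continuous f) : omegaLimitSet f c → omegaLimitSet f c :=
  (mapsTo_omegaLimitSet hf).restrict f _ _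

lemma continuous_omegaMap (hf : Continuous f) : Continuous (omegaMap (c := c) hf) :=
  hf.restrict (mapsTo_omegaLimitSet hf)

lemma surjective_omegaMap (hf : Continuous f) : Function.Surjective (omegaMap (c := c) hf) := by
  rintro ⟨y, hy⟩
  obtain ⟨x, hx, hxy⟩ := surjOn_omegaLimitSet hf hy
  exact ⟨⟨x, hx⟩, Subtype.ext hxy⟩

lemma coe_omegaMap_iterate (hf : Continuous f) (x : omegaLimitSet f c) (k : ℕ) :
    ((omegaMap hf)^[k] x : unitI) = f^[k] x := by
  induction k with
  | zero => rfl
  | succ k ih =>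
    rw [Function.iterate_succ_apply', Function.iterate_succ_apply', ← ih]
    rfl

/-- An omega-limit set has no proper nonempty clopen forward-invariant subset: once the orbit
of `c` is close to such a set it can never leave. -/
lemma eq_univ_of_clopen_invariant (hf : Continuous f) {P : Set (omegaLimitSet f c)}
    (hP : IsClopen P) (hne : P.Nonempty) (hinv : MapsTo (omegaMap hf) P P) : P = univ := by
  have : CompactSpace (omegaLimitSet f c) :=
    isCompact_iff_compactSpace.1 isClosed_omegaLimitSet.isCompact
  obtain ⟨A, B, hA, hB, hPA, hPB, hAB⟩ := SeparatedNhds.of_isCompact_isCompact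
    (hP.isClosed.isCompact.image continuous_subtype_val)
    (hP.compl.isClosed.isCompact.image continuous_subtype_val)
    ((disjoint_image_iff Subtype.val_injective).2 disjoint_compl_right)
  have hW : omegaLimitSet f c ⊆ (A ∩ f ⁻¹' A) ∪ B := by
    intro y hy
    by_cases hyP : (⟨y, hy⟩ : omegaLimitSet f c) ∈ P
    · exact Or.inl ⟨hPA ⟨_, hyP, rfl⟩, hPA ⟨_, hinv hyP, rfl⟩⟩
    · exact Or.inr (hPB ⟨_, hyP, rfl⟩)
  obtain ⟨N, hN⟩ := eventually_atTop.1
    (eventually_mem_of_omegaLimitSet_subset ((hA.inter (hA.preimage hf)).union hB) hW)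
  obtain ⟨p, hp⟩ := hne
  obtain ⟨_, hz, M, hM, rfl⟩ :=
    mem_closure_iff.1 (mem_iInter.1 p.2 N) A hA (hPA ⟨p, hp, rfl⟩)
  have hstay : ∀ m, M ≤ m → f^[m] c ∈ A := by
    intro m hm
    induction m, hm using Nat.le_induction with
    | base => exact hz
    | succ m hm ih =>
      rw [Function.iterate_succ_apply']
      rcases hN m (hM.trans hm) with h | h
      · exact h.2
      · exact absurd h (Set.disjoint_left.1 hAB ih)
  have hcl := omegaLimitSet_subset_closure (eventually_atTop.2 ⟨M, hstay⟩)
  refine eq_univ_of_forall fun y => ?_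
  by_contra hy
  obtain ⟨z, hzB, hzA⟩ := mem_closure_iff.1 (hcl y.2) B hB (hPB ⟨y, hy, rfl⟩)
  exact Set.disjoint_left.1 hAB hzA hzB

lemma isolated_not_periodic (hf : Continuous f) [Infinite (omegaLimitSet f c)]
    (hfin : (nonIso (omegaLimitSet f c)).Finite) (p : omegaLimitSet f c)
    (hp : p ∉ nonIso (omegaLimitSet f c)) (k : ℕ) (hk : 0 < k) : (omegaMap hf)^[k] p ≠ p := by
  intro hper
  have : CompactSpace (omegaLimitSet f c) :=
    isCompact_iff_compactSpace.1 isClosed_omegaLimitSet.isCompact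
  have hD := image_nonIso (continuous_omegaMap (c := c) hf) (surjective_omegaMap hf) hfin
  have hinvD : MapsTo (omegaMap hf) (nonIso (omegaLimitSet f c)) (nonIso (omegaLimitSet f c)) :=
    fun y hy => hD.subset (mem_image_of_mem _ hy)
  let P : Set (omegaLimitSet f c) := (fun i => (omegaMap hf)^[i] p) '' Iio k
  have hPfin : P.Finite := (finite_Iio k).image _
  have hPiso : ∀ x ∈ P, IsOpen ({x} : Set (omegaLimitSet f c)) := by
    rintro _ ⟨i, hi, rfl⟩
    by_contra hx
    have := hinvD.iterate (k - i) hx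
    rw [← Function.iterate_add_apply, Nat.sub_add_cancel (le_of_lt hi), hper] at this
    exact hp this
  have hPopen : IsOpen P := by
    rw [← biUnion_of_singleton P]
    exact isOpen_biUnion hPiso
  have hPinv : MapsTo (omegaMap hf) P P := by
    rintro _ ⟨i, hi, rfl⟩
    have hi' : i < k := hi
    change omegaMap hf ((omegaMap hf)^[i] p) ∈ P
    rw [← Function.iterate_succ_apply' (omegaMap hf)]
    rcases Nat.lt_or_ge (i + 1) k with h' | h'
    · exact ⟨i + 1, h', rfl⟩
    · obtain rfl : k = i + 1 := by omega
      exact ⟨0, hk, hper.symm⟩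
  have hP := eq_univ_of_clopen_invariant hf ⟨hPfin.isClosed, hPopen⟩ ⟨p, 0, hk, rfl⟩ hPinv
  exact Set.infinite_univ (hP ▸ hPfin)

/-- If `c` belonged to `ω(c)`, its orbit would be finite: either `c` is isolated in `ω(c)`, and
recurrence makes it periodic, or its orbit stays in the finite set of non-isolated points. -/
lemma critical_notMem (hf : Continuous f) [Infinite (omegaLimitSet f c)]
    (hfin : (nonIso (omegaLimitSet f c)).Finite) : c ∉ omegaLimitSet f c := by
  intro hc
  have : CompactSpace (omegaLimitSet f c) :=
    isCompact_iff_compactSpace.1 isClosed_omegaLimitSet.isCompact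
  have hinf : ¬ (omegaLimitSet f c).Finite :=
    Set.infinite_coe_iff.1 (inferInstanceAs (Infinite (omegaLimitSet f c)))
  by_cases hcD : (⟨c, hc⟩ : omegaLimitSet f c) ∈ nonIso (omegaLimitSet f c)
  · have hD := image_nonIso (continuous_omegaMap (c := c) hf) (surjective_omegaMap hf) hfin
    have hinvD : MapsTo (omegaMap hf) (nonIso (omegaLimitSet f c)) (nonIso (omegaLimitSet f c)) :=
      fun y hy => hD.subset (mem_image_of_mem _ hy)
    have : Finite (nonIso (omegaLimitSet f c)) := hfin
    obtain ⟨i, j, hne, hij⟩ := Finite.exists_ne_map_eq_of_infinite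
      (fun i : ℕ => (⟨_, hinvD.iterate i hcD⟩ : nonIso (omegaLimitSet f c)))
    have h : f^[i] c = f^[j] c := by
      have := congrArg (fun x => (x.1 : unitI)) hij
      simpa only [coe_omegaMap_iterate] using this
    rcases lt_or_gt_of_ne hne with h' | h'
    · exact hinf (omegaLimitSet_finite_of_iterate_eq h' h)
    · exact hinf (omegaLimitSet_finite_of_iterate_eq h' h.symm)
  · have hiso : IsOpen ({⟨c, hc⟩} : Set (omegaLimitSet f c)) := not_not.1 hcD
    obtain ⟨V, hV, hVc⟩ := isOpen_induced_iff.1 hiso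
    have hcV : c ∈ V := by
      have : (⟨c, hc⟩ : omegaLimitSet f c) ∈ Subtype.val ⁻¹' V := hVc ▸ mem_singleton _
      exact this
    obtain ⟨_, hz, m, hm, rfl⟩ := mem_closure_iff.1 (mem_iInter.1 hc 1) V hV hcV
    have hmem : f^[m] c ∈ omegaLimitSet f c := (mapsTo_omegaLimitSet hf).iterate m hc
    have : (⟨f^[m] c, hmem⟩ : omegaLimitSet f c) ∈ ({⟨c, hc⟩} : Set (omegaLimitSet f c)) :=
      hVc ▸ hz
    have h : f^[m] c = c := congrArg Subtype.val (mem_singleton_iff.1 this)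
    exact hinf (omegaLimitSet_finite_of_iterate_eq (i := 0) hm h.symm)

/-- Away from the turning point a unimodal map is injective on a half-interval. -/
lemma omegaMap_locally_injective (hf : Unimodal f c) (hc : c ∉ omegaLimitSet f c)
    (x : omegaLimitSet f c) : ∃ u ∈ 𝓝 x, InjOn (omegaMap hf.1) u := by
  obtain ⟨hcont, -, -, hmono, hanti⟩ := hf
  have hne : (x : unitI) ≠ c := fun h => hc (mem_of_eq_of_mem h.symm x.2)
  rcases lt_or_gt_of_ne hne with h | h
  · refine ⟨Subtype.val ⁻¹' Iio c, (isOpen_Iio.preimage continuous_subtype_val).mem_nhds h, ?_⟩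
    intro a ha b hb hab
    exact Subtype.ext (hmono.injOn (mem_ofPred.2 (le_of_lt ha)) (mem_ofPred.2 (le_of_lt hb))
      (congrArg Subtype.val hab))
  · refine ⟨Subtype.val ⁻¹' Ioi c, (isOpen_Ioi.preimage continuous_subtype_val).mem_nhds h, ?_⟩
    intro a ha b hb hab
    exact Subtype.ext (hanti.injOn (mem_ofPred.2 (le_of_lt ha)) (mem_ofPred.2 (le_of_lt hb))
      (congrArg Subtype.val hab))

/-- The inhomogeneities form the inverse limit of the restriction of `f` to `ω(c)`. -/
def inhomHomeo (hf : Continuous f) : Inhom f c ≃ₜ BackOrbit (omegaMap (c := c) hf) where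
  toFun x := ⟨fun i => ⟨x.1.1 i, x.2 i⟩, fun i => Subtype.ext (x.1.2 i)⟩
  invFun y := ⟨⟨fun i => (y.1 i).1, fun i => congrArg Subtype.val (y.2 i)⟩, fun i => (y.1 i).2⟩
  left_inv _ := rfl
  right_inv _ := rfl
  continuous_toFun := by
    refine Continuous.subtype_mk (continuous_pi fun i => Continuous.subtype_mk ?_ _) _
    exact (continuous_apply i).comp (continuous_subtype_val.comp continuous_subtype_val)
  continuous_invFun := by
    refine Continuous.subtype_mk (Continuous.subtype_mk (continuous_pi fun i => ?_) _) _
    exact continuous_subtype_val.comp ((continuous_apply i).comp continuous_subtype_val)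

end Omega

/-! ### The ordinal space `ω·n + 1` -/

/-- Successor ordinals are isolated. -/
lemma OrdSpace.isOpen_singleton_of_succ {o : Ordinal} (x : OrdSpace o) (η : Ordinal)
    (hη : x.1 = Order.succ η) : IsOpen ({x} : Set (OrdSpace o)) := by
  have hηo : η ≤ o := (Order.le_succ η).trans (hη ▸ x.2)
  let z : OrdSpace o := ⟨η, hηo⟩
  have h1 : IsOpen (Ioi z) := isOpen_Ioi
  have h2 : IsOpen (Iic x) := by
    by_cases hx : Order.succ x.1 ≤ o
    · have : Iic x = Iio (⟨Order.succ x.1, hx⟩ : OrdSpace o) := by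
        ext y
        exact (Order.lt_succ_iff (a := y.1) (b := x.1)).symm
      rw [this]
      exact isOpen_Iio
    · have : Iic x = univ := by
        refine eq_univ_of_forall fun y => ?_
        exact Order.lt_succ_iff.1 (lt_of_le_of_lt y.2 (not_le.1 hx))
      rw [this]
      exact isOpen_univ
  have : ({x} : Set (OrdSpace o)) = Ioi z ∩ Iic x := by
    ext y
    constructor
    · rintro rfl
      exact ⟨show η < y.1 from hη ▸ Order.lt_succ η, le_refl y⟩
    · rintro ⟨hy1, hy2⟩
      have hy1' : η < y.1 := hy1
      have hy2' : y.1 ≤ x.1 := hy2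
      exact Subtype.ext (le_antisymm hy2' (hη ▸ Order.succ_le_of_lt hy1'))
  rw [this]
  exact h1.inter h2

/-- The only non-isolated points are among the multiples `ω·k`, `k ≤ n`. -/
lemma OrdSpace.finite_nonIso (n : ℕ) : (nonIso (OrdSpace (Ordinal.omega0 * n))).Finite := by
  have hfin : ((fun k : ℕ => Ordinal.omega0 * (k : Ordinal)) '' Iic n).Finite :=
    (finite_Iic n).image _
  refine Set.Finite.of_finite_image (f := Subtype.val) (hfin.subset ?_)
    Subtype.val_injective.injOn
  rintro _ ⟨x, hx, rfl⟩
  have hq : x.1 / Ordinal.omega0 ≤ n := Ordinal.div_le_of_le_mul x.2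
  obtain ⟨k, hk⟩ := Ordinal.lt_omega0.1 (hq.trans_lt (Ordinal.natCast_lt_omega0 n))
  obtain ⟨m, hm⟩ := Ordinal.lt_omega0.1 (Ordinal.mod_lt x.1 Ordinal.omega0_ne_zero)
  have hdm := Ordinal.div_add_mod x.1 Ordinal.omega0
  rw [hk, hm] at hdm
  cases m with
  | zero =>
    refine ⟨k, ?_, by simpa using hdm⟩
    rw [hk] at hq
    exact_mod_cast hq
  | succ m =>
    refine absurd (OrdSpace.isOpen_singleton_of_succ x (Ordinal.omega0 * k + m) ?_) hx
    rw [← hdm, Order.succ_eq_add_one, add_assoc]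
    push_cast
    rfl

lemma OrdSpace.infinite {n : ℕ} (hn : 0 < n) : Infinite (OrdSpace (Ordinal.omega0 * n)) := by
  have hle : ∀ m : ℕ, (m : Ordinal) ≤ Ordinal.omega0 * n := fun m =>
    (Ordinal.natCast_lt_omega0 m).le.trans
      (Ordinal.le_mul_left _ (by exact_mod_cast hn))
  refine Infinite.of_injective (fun m : ℕ => (⟨m, hle m⟩ : OrdSpace (Ordinal.omega0 * n))) ?_
  intro a b h
  have : (a : Ordinal) = b := congrArg Subtype.val h
  exact_mod_cast this

lemma OrdSpace.lift_homeo (o : Ordinal.{u}) :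
    Nonempty (OrdSpace o ≃ₜ OrdSpace (Ordinal.lift.{v} o)) := by
  let φ : OrdSpace o → OrdSpace (Ordinal.lift.{v} o) := fun x =>
    ⟨Ordinal.lift.{v} x.1, Ordinal.lift_le.2 x.2⟩
  have hφ : StrictMono φ := fun a b h => Ordinal.lift_lt.{v}.2 (show a.1 < b.1 from h)
  have hs : Function.Surjective φ := by
    rintro ⟨y, hy⟩
    obtain ⟨x, rfl⟩ := Ordinal.mem_range_lift_of_le hy
    exact ⟨⟨x, Ordinal.lift_le.1 hy⟩, rfl⟩
  exact ⟨(hφ.orderIsoOfSurjective φ hs).toHomeomorph⟩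

/-- The space `ω·n + 1` does not depend on the universe in which ordinals are taken. -/
lemma OrdSpace.universe_homeo (n : ℕ) :
    Nonempty (OrdSpace (Ordinal.omega0.{u} * n) ≃ₜ OrdSpace (Ordinal.omega0.{v} * n)) := by
  obtain ⟨a⟩ := OrdSpace.lift_homeo.{u, v} (Ordinal.omega0.{u} * n)
  obtain ⟨b⟩ := OrdSpace.lift_homeo.{v, u} (Ordinal.omega0.{v} * n)
  rw [Ordinal.lift_mul, Ordinal.lift_omega0, Ordinal.lift_natCast] at a b
  exact ⟨a.trans b.symm⟩

lemma nonIso_finite_of_homeo {X Y : Type*} [TopologicalSpace X] [TopologicalSpace Y] (e : X ≃ₜ Y)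
    (h : (nonIso Y).Finite) : (nonIso X).Finite := by
  refine (h.preimage e.injective.injOn).subset fun x hx ho => hx ?_
  have := ho.preimage e.continuous
  rwa [← image_singleton, e.injective.preimage_image] at this

theorem stmt1 (n : ℕ) (hn : 0 < n) (f : unitI → unitI) (c : unitI)
    (hf : Unimodal f c) (hleo : LEO f)
    (homega : HomeoOrd (omegaLimitSet f c) (Ordinal.omega0 * n)) :
    HomeoOrd (Inhom f c) (Ordinal.omega0 * n) := by
  obtain ⟨e⟩ := homega
  have := OrdSpace.infinite hn
  have : Infinite (omegaLimitSet f c) := Infinite.of_injective e.symm e.symm.injective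
  have hfin := nonIso_finite_of_homeo e (OrdSpace.finite_nonIso n)
  have : CompactSpace (omegaLimitSet f c) :=
    isCompact_iff_compactSpace.1 isClosed_omegaLimitSet.isCompact
  obtain ⟨a⟩ := backOrbit_homeo (continuous_omegaMap hf.1) (surjective_omegaMap hf.1) hfin
    (omegaMap_locally_injective hf (critical_notMem hf.1 hfin))
    (isolated_not_periodic hf.1 hfin)
  obtain ⟨b⟩ := OrdSpace.universe_homeo n
  exact ⟨(inhomHomeo hf.1).trans (a.trans (e.trans b))⟩

end
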